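/- arXiv:1909.08348 — 2 statements merged into one kernel-verified Lean document; each statement's English description precedes it below -/
import Mathlib

section
/- For every subset S' ⊆ S \ (F ∪ W) and every state s ∈ S', the reachability value satisfies val(◇F)(s) ≤ bestExit_{val(◇F)}(S'), i.e. the value of each state in S' is at most the best exit of S' computed with respect to the true value function. -/
/-!
Write `v` for the reachability value and suppose `bestExit_v(S') < v(s)` for some `s ∈ S'`.
Then there is a Reach strategy `σ` that guarantees more than `bestExit_v(S')` from `s`.  Let `u` be
the value of the minimizing MDP obtained by fixing `σ`: it is the limit of the value iteration from
`0`, a fixed point of the one-step operator (`mdpVal_fixed`), a lower bound for every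
`reachProb σ τ` (`mdpVal_le_reachProb`), and it is attained by a pure strategy of Safe
(`exists_reachProb_le_mdpVal`).  In particular `u ≤ v` and `u s > bestExit_v(S')`.

Let `μ` be the maximum of `u` on `S'`, and `T ⊆ S'` the states attaining it.  At `t ∈ T`, staying
moves of Reach are worth at most `μ` against every move of Safe, so conditioning `σ t` on the
non-staying moves keeps the guarantee `μ`.  If every move of Safe allowed `σ t` to leave `S'`, this
conditioned strategy would be an exit strategy of value at least `μ > bestExit_v(S')`, which is
impossible (`le_preExit`).  Hence at each `t ∈ T` Safe has a move keeping the play in `S'`, and as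
`u t = μ` is at most an average of values `≤ μ`, the play even stays in `T`.  So Safe avoids `F`
forever from `T`, giving `μ ≤ 0 ≤ bestExit_v(S') < μ`.
-/

open scoped BigOperators
open Filter Topology

attribute [local instance] Classical.propDecidable

noncomputable section

/-- A (memoryless randomized) strategy: at every state, a probability
distribution over the moves available according to `Γ`. -/
structure GStrategy (S M : Type) [Fintype S] [Fintype M] (Γ : S → Finset M) where
  prob : S → M → ℝ
  nonneg : ∀ s a, 0 ≤ prob s a
  sum_one : ∀ s, ∑ a ∈ Γ s, prob s a = 1
  supp_mem : ∀ s a, a ∉ Γ s → prob s a = 0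

/-- A two-player concurrent stochastic game. -/
structure ConcurrentGame (S M : Type) [Fintype S] [Fintype M] where
  ΓR : S → Finset M
  ΓS : S → Finset M
  ΓR_ne : ∀ s, (ΓR s).Nonempty
  ΓS_ne : ∀ s, (ΓS s).Nonempty
  δ : S → M → M → S → ℝ
  δ_nonneg : ∀ s a b s', 0 ≤ δ s a b s'
  δ_sum : ∀ s a b, ∑ s', δ s a b s' = 1

namespace ConcurrentGame

variable {S M : Type} [Fintype S] [Fintype M] (G : ConcurrentGame S M)

/-- Strategies of player Reach. -/
abbrev StratR := GStrategy S M G.ΓR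
/-- Strategies of player Safe. -/
abbrev StratS := GStrategy S M G.ΓS

/-- A valuation assigns to each state a number in `[0,1]`. -/
def Valuation (v : S → ℝ) : Prop := ∀ s, v s ∈ Set.Icc (0 : ℝ) 1

/-- Expected value `Pre_{σ,τ}(v)(s)` of valuation `v` at `s` under strategies `σ, τ`. -/
def preST (σ : G.StratR) (τ : G.StratS) (v : S → ℝ) (s : S) : ℝ :=
  ∑ a, ∑ b, ∑ s', v s' * G.δ s a b s' * σ.prob s a * τ.prob s b

/-- Bellman operator `Pre(v)(s)` for the (maximizing) reachability player. -/
def preR (v : S → ℝ) (s : S) : ℝ :=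
  ⨆ σ : G.StratR, ⨅ τ : G.StratS, G.preST σ τ v s

/-- Bellman operator for the (maximizing) safety player. -/
def preS (v : S → ℝ) (s : S) : ℝ :=
  ⨆ τ : G.StratS, ⨅ σ : G.StratR, G.preST σ τ v s

/-- `Pre_{R:σ}(v)(s)`: value with the Reach strategy fixed. -/
def preRFix (σ : G.StratR) (v : S → ℝ) (s : S) : ℝ :=
  ⨅ τ : G.StratS, G.preST σ τ v s

/-- `Pre_{S:τ}(v)(s)`: value with the Safe strategy fixed. -/
def preSFix (τ : G.StratS) (v : S → ℝ) (s : S) : ℝ :=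
  ⨅ σ : G.StratR, G.preST σ τ v s

/-- Potential successors `Dest(s,a,b)`: support of `δ(s,a,b)`. -/
def Dest (s : S) (a b : M) : Set S := {s' | G.δ s a b s' ≠ 0}

/-- `Dest(s,σ,τ)`: successors under supports of the two strategies. -/
def DestStrat (s : S) (σ : G.StratR) (τ : G.StratS) : Set S :=
  ⋃ a ∈ {a | σ.prob s a ≠ 0}, ⋃ b ∈ {b | τ.prob s b ≠ 0}, G.Dest s a b

/-- One finite-horizon step for reachability of `F` under fixed strategies. -/
def reachStep (F : Set S) (σ : G.StratR) (τ : G.StratS) (v : S → ℝ) : S → ℝ :=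
  fun s => if s ∈ F then 1 else G.preST σ τ v s

/-- Probability of reaching `F` within `n` steps under `σ, τ`. -/
def reachProbN (F : Set S) (σ : G.StratR) (τ : G.StratS) (n : ℕ) : S → ℝ :=
  (G.reachStep F σ τ)^[n] (fun _ => 0)

/-- `P^{σ,τ}_s(◇F)`: probability of eventually reaching `F`
(limit of the finite-horizon reachability probabilities). -/
def reachProb (F : Set S) (σ : G.StratR) (τ : G.StratS) (s : S) : ℝ :=
  ⨆ n, G.reachProbN F σ τ n s

/-- The reachability value `val(◇F)(s)`. -/
def reachVal (F : Set S) (s : S) : ℝ :=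
  ⨆ σ : G.StratR, ⨅ τ : G.StratS, G.reachProb F σ τ s

/-- `val_{R:σ}(◇F)`: reachability value under a fixed Reach strategy. -/
def valFixR (F : Set S) (σ : G.StratR) (s : S) : ℝ :=
  ⨅ τ : G.StratS, G.reachProb F σ τ s

/-- `val_{S:τ}(□C)` for `C = S \ F`: safety value under a fixed Safe strategy
(the complement event of `◇F`). -/
def safeValFix (F : Set S) (τ : G.StratS) (s : S) : ℝ :=
  ⨅ σ : G.StratR, (1 - G.reachProb F σ τ s)

/-- The safety value `val(□C)(s)` for `C = S \ F`. -/
def safeVal (F : Set S) (s : S) : ℝ :=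
  ⨆ τ : G.StratS, G.safeValFix F τ s

/-- The sure winning region `W` of the safety player. -/
def sureWin (F : Set S) : Set S := {s | G.reachVal F s = 0}

/-- A set of states is absorbing if all transitions from it stay inside it. -/
def Absorbing (F : Set S) : Prop := ∀ s ∈ F, ∀ a b, G.Dest s a b ⊆ F

/-- End components. -/
def IsEC (E : Set S) : Prop :=
  E.Nonempty ∧ ∃ σ : G.StratR, ∃ τ : G.StratS,
    (∀ s ∈ E, G.DestStrat s σ τ ⊆ E) ∧
    ∀ s ∈ E, ∀ s' ∈ E, ∃ n : ℕ, ∃ p : ℕ → S, p 0 = s ∧ p n = s' ∧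
      (∀ i ≤ n, p i ∈ E) ∧ ∀ i < n, p (i + 1) ∈ G.DestStrat (p i) σ τ

/-- Maximal end components. -/
def IsMEC (E : Set S) : Prop :=
  G.IsEC E ∧ ∀ E', G.IsEC E' → E ⊆ E' → E' = E

/-- A move `a` of player Reach is staying (w.r.t. `E`) at `s`. -/
def Staying (E : Set S) (s : S) (a : M) : Prop :=
  a ∈ G.ΓR s ∧ ∀ b ∈ G.ΓS s, G.Dest s a b ⊆ E

/-- `Σ^{exit(E)}_R(s)`: Reach strategies forced to leave `E` from `s`,
using no staying move. -/
def ExitStrats (E : Set S) (s : S) : Set G.StratR :=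
  {σ | (∀ τ : G.StratS, ¬ G.DestStrat s σ τ ⊆ E) ∧
    ∀ a, σ.prob s a ≠ 0 → ¬ G.Staying E s a}

/-- `Pre^{exit(E)}(v)(s)`. -/
def preExit (E : Set S) (v : S → ℝ) (s : S) : ℝ :=
  ⨆ σ : G.ExitStrats E s, ⨅ τ : G.StratS, G.preST σ.1 τ v s

/-- The best exit `bestExit_v(E)` of `E` w.r.t. valuation `v`. -/
def bestExit (E : Set S) (v : S → ℝ) : ℝ :=
  ⨆ s ∈ E, G.preExit E v s

/-- One attractor step (within `E`). -/
def attrStep (E B : Set S) : Set S :=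
  B ∪ {s ∈ E | ∃ a ∈ G.ΓR s, ∀ b ∈ G.ΓS s, G.Dest s a b ⊆ B}

/-- The attractor `Attr(B)` of `B ⊆ E` within `E`. -/
def attr (E B : Set S) : Set S := (G.attrStep E)^[Nat.card E] B

/-- The states of `E` realizing the best exit w.r.t. `v`. -/
def bestSet (E : Set S) (v : S → ℝ) : Set S :=
  {s ∈ E | G.preExit E v s = G.bestExit E v}

/-- The sequence `(D^i(v), D^i(E))` of intermediate valuations and remaining
sets of the DEFLATE procedure. -/
def deflateSeq (v : S → ℝ) (E : Set S) : ℕ → (S → ℝ) × Set S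
  | 0 => (v, E)
  | i + 1 =>
    (fun s => if s ∈ (deflateSeq v E i).2 then
        min ((deflateSeq v E i).1 s)
          (G.bestExit (deflateSeq v E i).2 (deflateSeq v E i).1)
      else (deflateSeq v E i).1 s,
     (deflateSeq v E i).2 \
       G.attr (deflateSeq v E i).2
         (G.bestSet (deflateSeq v E i).2 (deflateSeq v E i).1))

/-- `DEFLATE(v, E)`. -/
def deflate (v : S → ℝ) (E : Set S) : S → ℝ := (G.deflateSeq v E (Nat.card E)).1

/-- Apply DEFLATE on every maximal end component
(maximal end components are pairwise disjoint). -/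
def deflateAll (v : S → ℝ) : S → ℝ :=
  fun s => if h : ∃ E, G.IsMEC E ∧ s ∈ E then G.deflate v h.choose s else v s

/-- One step of the bounded value iteration upper bound: apply `Pre`,
then DEFLATE every maximal end component. -/
def bviStep (v : S → ℝ) : S → ℝ := G.deflateAll (G.preR v)

/-- The upper-bound sequence `U_k` of bounded value iteration. -/
def upperSeq (W : Set S) : ℕ → S → ℝ
  | 0 => fun s => if s ∈ W then 0 else 1
  | k + 1 => G.bviStep (upperSeq W k)

/-- The sequence `(v_i, E_i)` of the INFLATE procedure (dual of DEFLATE,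
for the safety player). -/
def inflateSeq (v : S → ℝ) (E : Set S) : ℕ → (S → ℝ) × Set S
  | 0 => (v, E)
  | i + 1 =>
    (fun s => if s ∈ (inflateSeq v E i).2 then
        max ((inflateSeq v E i).1 s)
          (1 - G.bestExit (inflateSeq v E i).2 (fun t => 1 - (inflateSeq v E i).1 t))
      else (inflateSeq v E i).1 s,
     (inflateSeq v E i).2 \
       G.attr (inflateSeq v E i).2
         (G.bestSet (inflateSeq v E i).2 (fun t => 1 - (inflateSeq v E i).1 t)))

/-- `INFLATE(v, E)`. -/
def inflate (v : S → ℝ) (E : Set S) : S → ℝ := (G.inflateSeq v E (Nat.card E)).1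

end ConcurrentGame

namespace ConcurrentGame

variable {S M : Type} [Fintype S] [Fintype M]

section Strategies

variable {Γ : S → Finset M}

/-- The pure strategy playing the move `f s` at each state `s`. -/
def pureStrat (f : S → M) (hf : ∀ s, f s ∈ Γ s) : GStrategy S M Γ where
  prob s a := if a = f s then 1 else 0
  nonneg s a := by split_ifs <;> norm_num
  sum_one s := by simp [hf s]
  supp_mem s a ha := by
    rw [if_neg]
    rintro rfl
    exact ha (hf s)

lemma sum_prob (σ : GStrategy S M Γ) (s : S) : ∑ a, σ.prob s a = 1 := by
  rw [← σ.sum_one s]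
  symm
  exact Finset.sum_subset (Finset.subset_univ _) (fun a _ ha => σ.supp_mem s a ha)

lemma mem_of_prob_ne (σ : GStrategy S M Γ) {s : S} {a : M} (h : σ.prob s a ≠ 0) : a ∈ Γ s := by
  by_contra ha
  exact h (σ.supp_mem s a ha)

lemma exists_prob_ne (σ : GStrategy S M Γ) (s : S) : ∃ a, σ.prob s a ≠ 0 := by
  by_contra! h
  have := sum_prob σ s
  simp [h] at this

/-- The strategy `σ` with its distribution at the single state `t` conditioned on the moves
satisfying `p`, an event assumed to have positive probability. -/
def condStrat (σ : GStrategy S M Γ) (t : S) (p : M → Prop)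
    (hp : 0 < ∑ a, if p a then σ.prob t a else 0) : GStrategy S M Γ where
  prob s a := if s = t then
      (if p a then σ.prob t a else 0) / ∑ a, (if p a then σ.prob t a else 0)
    else σ.prob s a
  nonneg s a := by
    have := σ.nonneg t a
    have := σ.nonneg s a
    split_ifs <;> positivity
  sum_one s := by
    by_cases h : s = t
    · subst h
      simp only [if_true]
      rw [← Finset.sum_div, div_eq_one_iff_eq hp.ne']
      refine Finset.sum_subset (Finset.subset_univ _) (fun a _ ha => ?_)
      simp [σ.supp_mem s a ha]
    · simp only [h, if_false]
      exact σ.sum_one s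
  supp_mem s a ha := by
    by_cases h : s = t
    · subst h
      simp [σ.supp_mem s a ha]
    · simp only [h, if_false]
      exact σ.supp_mem s a ha

end Strategies

variable (G : ConcurrentGame S M)

instance : Nonempty G.StratR :=
  ⟨pureStrat (fun s => (G.ΓR_ne s).choose) (fun s => (G.ΓR_ne s).choose_spec)⟩

instance : Nonempty G.StratS :=
  ⟨pureStrat (fun s => (G.ΓS_ne s).choose) (fun s => (G.ΓS_ne s).choose_spec)⟩

/-! ### Expected values of a one-step play -/

/-- Expected value of `w` after the pair of moves `(a, b)` is played at `s`. -/
def moveVal (w : S → ℝ) (s : S) (a b : M) : ℝ := ∑ s', G.δ s a b s' * w s'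

/-- Expected value of `w` when Reach plays `σ` and Safe plays the move `b` at `s`. -/
def respVal (σ : G.StratR) (w : S → ℝ) (s : S) (b : M) : ℝ :=
  ∑ a, σ.prob s a * G.moveVal w s a b

lemma preST_eq (σ : G.StratR) (τ : G.StratS) (w : S → ℝ) (s : S) :
    G.preST σ τ w s = ∑ b, τ.prob s b * G.respVal σ w s b := by
  unfold preST respVal moveVal
  rw [Finset.sum_comm]
  refine Finset.sum_congr rfl (fun b _ => ?_)
  rw [Finset.mul_sum]
  refine Finset.sum_congr rfl (fun a _ => ?_)
  rw [Finset.mul_sum, Finset.mul_sum]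
  exact Finset.sum_congr rfl (fun s' _ => by ring)

lemma preST_pure (σ : G.StratR) (f : S → M) (hf : ∀ s, f s ∈ G.ΓS s) (w : S → ℝ) (s : S) :
    G.preST σ (pureStrat f hf) w s = G.respVal σ w s (f s) := by
  rw [preST_eq]
  simp [pureStrat]

lemma moveVal_mono {w w' : S → ℝ} (h : w ≤ w') (s : S) (a b : M) :
    G.moveVal w s a b ≤ G.moveVal w' s a b :=
  Finset.sum_le_sum (fun s' _ => mul_le_mul_of_nonneg_left (h s') (G.δ_nonneg s a b s'))

lemma respVal_mono (σ : G.StratR) {w w' : S → ℝ} (h : w ≤ w') (s : S) (b : M) :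
    G.respVal σ w s b ≤ G.respVal σ w' s b :=
  Finset.sum_le_sum (fun a _ =>
    mul_le_mul_of_nonneg_left (G.moveVal_mono h s a b) (σ.nonneg s a))

lemma respVal_const (σ : G.StratR) (c : ℝ) (s : S) (b : M) :
    G.respVal σ (fun _ => c) s b = c := by
  unfold respVal moveVal
  simp_rw [← Finset.sum_mul, G.δ_sum, one_mul]
  rw [← Finset.sum_mul, sum_prob, one_mul]

lemma preST_mono (σ : G.StratR) (τ : G.StratS) {w w' : S → ℝ} (h : w ≤ w') (s : S) :
    G.preST σ τ w s ≤ G.preST σ τ w' s := by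
  rw [preST_eq, preST_eq]
  exact Finset.sum_le_sum (fun b _ =>
    mul_le_mul_of_nonneg_left (G.respVal_mono σ h s b) (τ.nonneg s b))

lemma preST_const (σ : G.StratR) (τ : G.StratS) (c : ℝ) (s : S) :
    G.preST σ τ (fun _ => c) s = c := by
  rw [preST_eq]
  simp_rw [respVal_const]
  rw [← Finset.sum_mul, sum_prob, one_mul]

lemma le_preST (σ : G.StratR) (τ : G.StratS) (w : S → ℝ) (s : S) (c : ℝ)
    (h : ∀ b ∈ G.ΓS s, c ≤ G.respVal σ w s b) : c ≤ G.preST σ τ w s := by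
  rw [preST_eq]
  calc c = ∑ b, τ.prob s b * c := by rw [← Finset.sum_mul, sum_prob, one_mul]
    _ ≤ _ := Finset.sum_le_sum (fun b _ => by
      by_cases hb : b ∈ G.ΓS s
      · exact mul_le_mul_of_nonneg_left (h b hb) (τ.nonneg s b)
      · simp [τ.supp_mem s b hb])

/-! ### Bounds for reachability probabilities and values -/

variable (F : Set S)

lemma reachStep_mono (σ : G.StratR) (τ : G.StratS) : Monotone (G.reachStep F σ τ) := by
  intro w w' h s
  unfold reachStep
  split_ifs
  · exact le_rfl
  · exact G.preST_mono σ τ h s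

lemma reachProbN_succ (σ : G.StratR) (τ : G.StratS) (n : ℕ) :
    G.reachProbN F σ τ (n + 1) = G.reachStep F σ τ (G.reachProbN F σ τ n) :=
  Function.iterate_succ_apply' _ _ _

lemma reachProbN_le_one (σ : G.StratR) (τ : G.StratS) (n : ℕ) :
    G.reachProbN F σ τ n ≤ fun _ => 1 := by
  induction n with
  | zero => intro s; simp [reachProbN]
  | succ n ih =>
    intro s
    rw [reachProbN_succ]
    refine (G.reachStep_mono F σ τ ih s).trans ?_
    unfold reachStep
    rw [preST_const]
    simp

lemma reachProbN_nonneg (σ : G.StratR) (τ : G.StratS) (n : ℕ) :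
    (fun _ => 0) ≤ G.reachProbN F σ τ n := by
  induction n with
  | zero => intro s; simp [reachProbN]
  | succ n ih =>
    intro s
    rw [reachProbN_succ]
    refine le_trans ?_ (G.reachStep_mono F σ τ ih s)
    unfold reachStep
    rw [preST_const]
    split_ifs <;> simp

lemma reachProb_bdd (σ : G.StratR) (τ : G.StratS) (s : S) :
    BddAbove (Set.range fun n => G.reachProbN F σ τ n s) :=
  ⟨1, by rintro _ ⟨n, rfl⟩; exact G.reachProbN_le_one F σ τ n s⟩

lemma reachProb_nonneg (σ : G.StratR) (τ : G.StratS) (s : S) : 0 ≤ G.reachProb F σ τ s :=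
  Real.iSup_nonneg (fun n => G.reachProbN_nonneg F σ τ n s)

lemma reachProb_le_one (σ : G.StratR) (τ : G.StratS) (s : S) : G.reachProb F σ τ s ≤ 1 :=
  ciSup_le (fun n => G.reachProbN_le_one F σ τ n s)

lemma reachProb_inf_bdd (σ : G.StratR) (s : S) :
    BddBelow (Set.range fun τ => G.reachProb F σ τ s) :=
  ⟨0, by rintro _ ⟨τ, rfl⟩; exact G.reachProb_nonneg F σ τ s⟩

lemma reachVal_bdd (s : S) :
    BddAbove (Set.range fun σ : G.StratR => ⨅ τ : G.StratS, G.reachProb F σ τ s) :=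
  ⟨1, by
    rintro _ ⟨σ, rfl⟩
    obtain ⟨τ⟩ : Nonempty G.StratS := inferInstance
    exact (ciInf_le (G.reachProb_inf_bdd F σ s) τ).trans (G.reachProb_le_one F σ τ s)⟩

lemma reachVal_nonneg (s : S) : 0 ≤ G.reachVal F s :=
  Real.iSup_nonneg (fun σ => Real.iInf_nonneg (fun τ => G.reachProb_nonneg F σ τ s))

lemma reachVal_le_one (s : S) : G.reachVal F s ≤ 1 :=
  ciSup_le (fun σ => by
    obtain ⟨τ⟩ : Nonempty G.StratS := inferInstance
    exact (ciInf_le (G.reachProb_inf_bdd F σ s) τ).trans (G.reachProb_le_one F σ τ s))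

/-! ### The minimizing MDP of Safe against a fixed strategy of Reach -/

/-- One step of value iteration for Safe, minimizing the probability of reaching `F`,
against the fixed strategy `σ`. -/
def mdpStep (σ : G.StratR) (w : S → ℝ) : S → ℝ :=
  fun s => if s ∈ F then 1 else (G.ΓS s).inf' (G.ΓS_ne s) (fun b => G.respVal σ w s b)

/-- The value of the minimizing MDP: the limit of value iteration from `0`. -/
def mdpVal (σ : G.StratR) : S → ℝ := fun s => ⨆ n, (G.mdpStep F σ)^[n] (fun _ => 0) s

lemma mdpStep_mono (σ : G.StratR) : Monotone (G.mdpStep F σ) := by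
  intro w w' h s
  unfold mdpStep
  split_ifs
  · exact le_rfl
  · refine Finset.le_inf' _ _ (fun b hb => ?_)
    exact (Finset.inf'_le _ hb).trans (G.respVal_mono σ h s b)

lemma mdpStep_le_reachStep (σ : G.StratR) (τ : G.StratS) (w : S → ℝ) :
    G.mdpStep F σ w ≤ G.reachStep F σ τ w := by
  intro s
  unfold mdpStep reachStep
  split_ifs
  · exact le_rfl
  · exact G.le_preST σ τ w s _ (fun b hb => Finset.inf'_le _ hb)

lemma mdpStep_continuous (σ : G.StratR) : Continuous (G.mdpStep F σ) := by
  refine continuous_pi (fun s => ?_)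
  unfold mdpStep
  split_ifs
  · exact continuous_const
  · refine Continuous.finset_inf'_apply _ (fun b _ => ?_)
    unfold respVal moveVal
    fun_prop

lemma mdpIter_le_reachProbN (σ : G.StratR) (τ : G.StratS) (n : ℕ) :
    (G.mdpStep F σ)^[n] (fun _ => 0) ≤ G.reachProbN F σ τ n := by
  induction n with
  | zero => exact le_rfl
  | succ n ih =>
    rw [reachProbN_succ, Function.iterate_succ_apply']
    exact (G.mdpStep_mono F σ ih).trans (G.mdpStep_le_reachStep F σ τ _)

lemma mdpVal_le_reachProb (σ : G.StratR) (τ : G.StratS) (s : S) :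
    G.mdpVal F σ s ≤ G.reachProb F σ τ s :=
  ciSup_mono (G.reachProb_bdd F σ τ s) (fun n => G.mdpIter_le_reachProbN F σ τ n s)

lemma mdpIter_bdd (σ : G.StratR) (s : S) :
    BddAbove (Set.range fun n => (G.mdpStep F σ)^[n] (fun _ => 0) s) := by
  obtain ⟨τ⟩ : Nonempty G.StratS := inferInstance
  refine ⟨1, ?_⟩
  rintro _ ⟨n, rfl⟩
  exact (G.mdpIter_le_reachProbN F σ τ n s).trans (G.reachProbN_le_one F σ τ n s)

lemma mdpVal_nonneg (σ : G.StratR) (s : S) : 0 ≤ G.mdpVal F σ s :=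
  le_ciSup (G.mdpIter_bdd F σ s) 0

/-- The iterates increase to `mdpVal`, and the one-step operator is continuous because Safe has
finitely many moves. -/
lemma mdpVal_fixed (σ : G.StratR) : G.mdpStep F σ (G.mdpVal F σ) = G.mdpVal F σ := by
  have h0 : (fun _ => 0) ≤ G.mdpStep F σ (fun _ => 0) := by
    intro s
    unfold mdpStep
    split_ifs
    · exact zero_le_one
    · exact Finset.le_inf' _ _ (fun b _ => (G.respVal_const σ 0 s b).ge)
  have hmono := (G.mdpStep_mono F σ).monotone_iterate_of_le_map h0
  refine isFixedPt_of_tendsto_iterate (x := fun _ => 0) ?_ (G.mdpStep_continuous F σ).continuousAt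
  rw [tendsto_pi_nhds]
  exact fun s => tendsto_atTop_ciSup (fun m n hmn => hmono hmn s) (G.mdpIter_bdd F σ s)

lemma mdpVal_le_respVal (σ : G.StratR) {s : S} (hs : s ∉ F) {b : M} (hb : b ∈ G.ΓS s) :
    G.mdpVal F σ s ≤ G.respVal σ (G.mdpVal F σ) s b := by
  conv_lhs => rw [← mdpVal_fixed]
  unfold mdpStep
  rw [if_neg hs]
  exact Finset.inf'_le _ hb

/-- Playing at each state a move attaining the minimum in the fixed-point equation is optimal
for Safe. -/
lemma exists_reachProb_le_mdpVal (σ : G.StratR) :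
    ∃ τ : G.StratS, ∀ s, G.reachProb F σ τ s ≤ G.mdpVal F σ s := by
  have hex : ∀ s, ∃ b ∈ G.ΓS s, (G.ΓS s).inf' (G.ΓS_ne s)
      (fun b => G.respVal σ (G.mdpVal F σ) s b) = G.respVal σ (G.mdpVal F σ) s b :=
    fun s => Finset.exists_mem_eq_inf' _ _
  choose f hf hfe using hex
  have hfix : G.reachStep F σ (pureStrat f hf) (G.mdpVal F σ) = G.mdpVal F σ := by
    conv_rhs => rw [← mdpVal_fixed]
    funext s
    unfold reachStep mdpStep
    rw [preST_pure, hfe]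
  refine ⟨pureStrat f hf, fun s => ciSup_le (fun n => ?_)⟩
  have h : G.reachProbN F σ (pureStrat f hf) n ≤ G.mdpVal F σ := by
    induction n with
    | zero => exact fun s => G.mdpVal_nonneg F σ s
    | succ n ih =>
      rw [reachProbN_succ]
      exact (G.reachStep_mono F σ _ ih).trans hfix.le
  exact h s

lemma mdpVal_le_reachVal (σ : G.StratR) (s : S) : G.mdpVal F σ s ≤ G.reachVal F s :=
  (le_ciInf (fun τ => G.mdpVal_le_reachProb F σ τ s)).trans (le_ciSup (G.reachVal_bdd F s) σ)

/-! ### Exit values -/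

lemma preST_inf_bdd (σ : G.StratR) {v : S → ℝ} (hv : Valuation v) (s : S) :
    BddBelow (Set.range fun τ : G.StratS => G.preST σ τ v s) :=
  ⟨0, by
    rintro _ ⟨τ, rfl⟩
    rw [← G.preST_const σ τ 0 s]
    exact G.preST_mono σ τ (fun s => (hv s).1) s⟩

lemma preExit_bdd (E : Set S) {v : S → ℝ} (hv : Valuation v) (s : S) :
    BddAbove (Set.range fun σ : G.ExitStrats E s => ⨅ τ : G.StratS, G.preST σ.1 τ v s) :=
  ⟨1, by
    rintro _ ⟨σ, rfl⟩
    obtain ⟨τ⟩ : Nonempty G.StratS := inferInstance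
    refine (ciInf_le (G.preST_inf_bdd σ.1 hv s) τ).trans ?_
    rw [← G.preST_const σ.1 τ 1 s]
    exact G.preST_mono σ.1 τ (fun s => (hv s).2) s⟩

/-- The supremum defining `preExit` is `0` when there is no exit strategy, so no nonemptiness
is needed. -/
lemma preExit_nonneg (E : Set S) {v : S → ℝ} (hv : Valuation v) (s : S) :
    0 ≤ G.preExit E v s :=
  Real.iSup_nonneg (fun σ => Real.iInf_nonneg (fun τ => by
    rw [← G.preST_const σ.1 τ 0 s]
    exact G.preST_mono σ.1 τ (fun s => (hv s).1) s))

lemma bestExit_nonneg (E : Set S) {v : S → ℝ} (hv : Valuation v) : 0 ≤ G.bestExit E v :=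
  Real.iSup_nonneg (fun s => Real.iSup_nonneg (fun _ => G.preExit_nonneg E hv s))

lemma preExit_le_bestExit (E : Set S) (v : S → ℝ) {s : S} (hs : s ∈ E) :
    G.preExit E v s ≤ G.bestExit E v := by
  have h := le_ciSup (f := fun s => ⨆ _ : s ∈ E, G.preExit E v s)
    (Set.finite_range _).bddAbove s
  rw [ciSup_pos hs] at h
  exact h

lemma moveVal_le_of_dest {E : Set S} {u : S → ℝ} {μ : ℝ} (hμ : ∀ s ∈ E, u s ≤ μ)
    {t : S} {a b : M} (h : G.Dest t a b ⊆ E) : G.moveVal u t a b ≤ μ := by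
  calc G.moveVal u t a b ≤ ∑ s', G.δ t a b s' * μ := by
        refine Finset.sum_le_sum (fun s' _ => ?_)
        by_cases h0 : G.δ t a b s' = 0
        · simp [h0]
        · exact mul_le_mul_of_nonneg_left (hμ s' (h h0)) (G.δ_nonneg t a b s')
    _ = μ := by rw [← Finset.sum_mul, G.δ_sum, one_mul]

/-- Suppose `σ` guarantees at `t` the expectation `μ` of a valuation `u ≤ v` bounded by `μ` on `E`,
and every move of Safe lets `σ` leave `E`. Discarding the staying moves of `σ`, each worth at
most `μ`, gives an exit strategy that still guarantees `μ`. -/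
lemma le_preExit {E : Set S} {u v : S → ℝ} (hv : Valuation v) (huv : u ≤ v) {μ : ℝ}
    (hμ : ∀ s ∈ E, u s ≤ μ) (σ : G.StratR) (t : S)
    (hσ : ∀ b ∈ G.ΓS t, μ ≤ G.respVal σ u t b)
    (hexit : ∀ b ∈ G.ΓS t, ∃ a, σ.prob t a ≠ 0 ∧ ¬ G.Dest t a b ⊆ E) :
    μ ≤ G.preExit E v t := by
  obtain ⟨p, hp⟩ : ∃ p : M → Prop, ∀ a, p a ↔ ¬ G.Staying E t a := ⟨_, fun _ => Iff.rfl⟩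
  have hnn : ∀ a, 0 ≤ (if p a then σ.prob t a else 0) := by
    intro a
    have := σ.nonneg t a
    split_ifs <;> simp [this]
  have hc : 0 < ∑ a, if p a then σ.prob t a else 0 := by
    obtain ⟨b, hb⟩ := G.ΓS_ne t
    obtain ⟨a, ha, hab⟩ := hexit b hb
    refine Finset.sum_pos' (fun a _ => hnn a) ⟨a, Finset.mem_univ _, ?_⟩
    rw [if_pos ((hp a).mpr (fun h => hab (h.2 b hb)))]
    exact lt_of_le_of_ne (σ.nonneg t a) ha.symm
  set σ' : G.StratR := condStrat σ t p hc with hσ'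
  have hprob : ∀ a, σ'.prob t a = (if p a then σ.prob t a else 0) /
      ∑ a, (if p a then σ.prob t a else 0) := by
    intro a
    simp [hσ', condStrat]
  have hmem : σ' ∈ G.ExitStrats E t := by
    constructor
    · intro τ hsub
      obtain ⟨b, hb⟩ := exists_prob_ne τ t
      have hbΓ := mem_of_prob_ne τ hb
      obtain ⟨a, ha, hab⟩ := hexit b hbΓ
      have ha' : σ'.prob t a ≠ 0 := by
        rw [hprob, if_pos ((hp a).mpr (fun h => hab (h.2 b hbΓ)))]
        exact div_ne_zero ha hc.ne'
      refine hab (fun s' hs' => hsub ?_)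
      simp only [DestStrat, Set.mem_iUnion]
      exact ⟨a, ha', b, hb, hs'⟩
    · intro a ha hst
      apply ha
      rw [hprob, if_neg (fun h => (hp a).mp h hst), zero_div]
  have hresp : ∀ b ∈ G.ΓS t, μ ≤ G.respVal σ' v t b := by
    intro b hb
    refine le_trans ?_ (G.respVal_mono σ' huv t b)
    have hform : G.respVal σ' u t b =
        (∑ a, (if p a then σ.prob t a else 0) * G.moveVal u t a b) /
          ∑ a, (if p a then σ.prob t a else 0) := by
      unfold respVal
      rw [Finset.sum_div]
      exact Finset.sum_congr rfl (fun a _ => by rw [hprob]; ring)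
    rw [hform, le_div_iff₀ hc]
    -- Compare termwise the excess over `μ`: it is nonpositive on the discarded moves.
    have hle : ∑ a, σ.prob t a * (G.moveVal u t a b - μ) ≤
        ∑ a, (if p a then σ.prob t a else 0) * (G.moveVal u t a b - μ) := by
      refine Finset.sum_le_sum (fun a _ => ?_)
      by_cases hpa : p a
      · rw [if_pos hpa]
      · rw [if_neg hpa, zero_mul]
        have hst : G.Staying E t a := not_not.mp (mt (hp a).mpr hpa)
        exact mul_nonpos_of_nonneg_of_nonpos (σ.nonneg t a)
          (sub_nonpos.mpr (G.moveVal_le_of_dest hμ (hst.2 b hb)))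
    have hlow := hσ b hb
    unfold respVal at hlow
    simp only [mul_sub, Finset.sum_sub_distrib, ← Finset.sum_mul, sum_prob] at hle
    linarith
  exact (le_ciInf (fun τ => G.le_preST σ' τ v t μ hresp)).trans
    (le_ciSup (G.preExit_bdd E hv t) ⟨σ', hmem⟩)

/-- An average of values at most `μ` reaches `μ` only if all values on the support equal `μ`. -/
lemma eq_of_le_respVal {E : Set S} {u : S → ℝ} {μ : ℝ} (hμ : ∀ s ∈ E, u s ≤ μ)
    (σ : G.StratR) {t : S} {b : M} (hstay : ∀ a, σ.prob t a ≠ 0 → G.Dest t a b ⊆ E)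
    (hle : μ ≤ G.respVal σ u t b) {a : M} (ha : σ.prob t a ≠ 0) {s' : S}
    (hs' : s' ∈ G.Dest t a b) : u s' = μ := by
  have hterm : ∀ a s', 0 ≤ σ.prob t a * (G.δ t a b s' * (μ - u s')) := by
    intro a s'
    by_cases h1 : σ.prob t a = 0
    · simp [h1]
    by_cases h2 : G.δ t a b s' = 0
    · simp [h2]
    exact mul_nonneg (σ.nonneg t a) (mul_nonneg (G.δ_nonneg t a b s')
      (sub_nonneg.mpr (hμ s' (hstay a h1 h2))))
  have hsum : ∑ a, ∑ s', σ.prob t a * (G.δ t a b s' * (μ - u s')) ≤ 0 := by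
    have heq : ∑ a, ∑ s', σ.prob t a * (G.δ t a b s' * (μ - u s')) =
        μ - G.respVal σ u t b := by
      simp only [respVal, moveVal, mul_sub, Finset.sum_sub_distrib, ← Finset.mul_sum,
        ← Finset.sum_mul, G.δ_sum, sum_prob, one_mul]
    linarith
  have hzero := (Finset.sum_eq_zero_iff_of_nonneg
    (fun a _ => Finset.sum_nonneg (fun s' _ => hterm a s'))).mp
    (le_antisymm hsum (Finset.sum_nonneg
      (fun a _ => Finset.sum_nonneg (fun s' _ => hterm a s')))) a (Finset.mem_univ _)
  have hz := (Finset.sum_eq_zero_iff_of_nonneg (fun s' _ => hterm a s')).mp hzero s'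
    (Finset.mem_univ _)
  have hs'' : G.δ t a b s' ≠ 0 := hs'
  have := (mul_eq_zero.mp ((mul_eq_zero.mp hz).resolve_left ha)).resolve_left hs''
  linarith

/-- If Safe has at each state of `T` a move keeping the play in `T`, and `T` is disjoint from `F`,
then Safe avoids `F` surely from `T`. -/
lemma mdpVal_eq_zero_of_trap (σ : G.StratR) {T : Set S} (hTF : ∀ t ∈ T, t ∉ F)
    (htrap : ∀ t ∈ T, ∃ b ∈ G.ΓS t, ∀ a, σ.prob t a ≠ 0 → G.Dest t a b ⊆ T) :
    ∀ t ∈ T, G.mdpVal F σ t = 0 := by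
  have hex : ∀ t, ∃ b ∈ G.ΓS t, t ∈ T → ∀ a, σ.prob t a ≠ 0 → G.Dest t a b ⊆ T := by
    intro t
    by_cases ht : t ∈ T
    · obtain ⟨b, hb, h⟩ := htrap t ht
      exact ⟨b, hb, fun _ => h⟩
    · obtain ⟨b, hb⟩ := G.ΓS_ne t
      exact ⟨b, hb, fun h => absurd h ht⟩
  choose f hf hfT using hex
  have hN : ∀ n, ∀ t ∈ T, G.reachProbN F σ (pureStrat f hf) n t = 0 := by
    intro n
    induction n with
    | zero => intro t _; rfl
    | succ n ih =>
      intro t ht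
      rw [reachProbN_succ]
      unfold reachStep
      rw [if_neg (hTF t ht), preST_pure]
      refine Finset.sum_eq_zero (fun a _ => ?_)
      by_cases ha : σ.prob t a = 0
      · rw [ha, zero_mul]
      · refine mul_eq_zero_of_right _ (Finset.sum_eq_zero (fun s' _ => ?_))
        by_cases hs' : G.δ t a (f t) s' = 0
        · rw [hs', zero_mul]
        · rw [ih s' (hfT t ht a ha hs'), mul_zero]
  intro t ht
  refine le_antisymm ?_ (G.mdpVal_nonneg F σ t)
  exact (G.mdpVal_le_reachProb F σ (pureStrat f hf) t).trans (ciSup_le (fun n => (hN n t ht).le))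

end ConcurrentGame

/-- The value of every state of a set `S' ⊆ S \ (F ∪ W)` is at most
the best exit of `S'` with respect to the true value function. -/
theorem val_le_bestExit {S M : Type} [Fintype S] [Fintype M] (G : ConcurrentGame S M)
    (F : Set S) (hF : G.Absorbing F) (hW : G.Absorbing (G.sureWin F))
    (S' : Set S) (hS' : S' ⊆ Set.univ \ (F ∪ G.sureWin F)) :
    ∀ s ∈ S', G.reachVal F s ≤ G.bestExit S' (G.reachVal F) := by
  intro s hs
  have hv : ConcurrentGame.Valuation (G.reachVal F) := fun s => ⟨G.reachVal_nonneg F s, G.reachVal_le_one F s⟩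
  by_contra! hlt
  obtain ⟨σ, hσ⟩ := exists_lt_of_lt_ciSup (show G.bestExit S' (G.reachVal F) <
    ⨆ σ : G.StratR, ⨅ τ : G.StratS, G.reachProb F σ τ s from hlt)
  obtain ⟨τ, hτ⟩ := G.exists_reachProb_le_mdpVal F σ
  have hsu : G.bestExit S' (G.reachVal F) < G.mdpVal F σ s :=
    hσ.trans_le ((ciInf_le (G.reachProb_inf_bdd F σ s) τ).trans (hτ s))
  obtain ⟨m, hmS, hmax⟩ := Set.exists_max_image S' (G.mdpVal F σ) S'.toFinite ⟨s, hs⟩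
  have hnF : ∀ t ∈ S', t ∉ F := fun t ht h => (hS' ht).2 (Or.inl h)
  have hbm : G.bestExit S' (G.reachVal F) < G.mdpVal F σ m := hsu.trans_le (hmax s hs)
  have hzero := G.mdpVal_eq_zero_of_trap F σ
    (T := {t | t ∈ S' ∧ G.mdpVal F σ t = G.mdpVal F σ m}) (fun t ht => hnF t ht.1) (by
      rintro t ⟨htS, htm⟩
      have hresp : ∀ b ∈ G.ΓS t, G.mdpVal F σ m ≤ G.respVal σ (G.mdpVal F σ) t b :=
        fun b hb => htm ▸ G.mdpVal_le_respVal F σ (hnF t htS) hb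
      have hkeep : ∃ b ∈ G.ΓS t, ∀ a, σ.prob t a ≠ 0 → G.Dest t a b ⊆ S' := by
        by_contra! hexit
        have h1 := G.le_preExit hv (G.mdpVal_le_reachVal F σ) hmax σ t hresp hexit
        have h2 := G.preExit_le_bestExit S' (G.reachVal F) htS
        linarith
      obtain ⟨b, hb, hstay⟩ := hkeep
      exact ⟨b, hb, fun a ha s' hs' =>
        ⟨hstay a ha hs', G.eq_of_le_respVal hmax σ hstay (hresp b hb) ha hs'⟩⟩)
    m ⟨hmS, rfl⟩
  have := G.bestExit_nonneg S' hv
  linarith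
end
end

section
/- Let v : S → [0,1] be a valuation. Then for every state s ∈ S, 1 − Pre_Reach(v)(s) = Pre_Safe(1 − v)(s), where Pre_Reach(v)(s) = sup_{σ∈Σ_R} inf_{τ∈Σ_S} Pre_{σ,τ}(v)(s) and Pre_Safe(w)(s) = sup_{τ∈Σ_S} inf_{σ∈Σ_R} Pre_{σ,τ}(w)(s); i.e. the Bellman operator of the maximizing Reach player and the Bellman operator of the maximizing Safe player are dual under complementation of valuations. -/
/-!
Fix a state `s`. Only the mixed move each player uses at `s` enters `preST`, and these mixed moves
range over compact convex sets (faces of the standard simplex), on which the payoff is bilinear.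
Sion's minimax theorem therefore yields a saddle point `(σ₀, τ₀)`: neither player gains by
deviating unilaterally (`exists_saddle`).

Complementing the valuation complements the payoff, `Pre_{σ,τ}(1 - v) = 1 - Pre_{σ,τ}(v)`
(`preST_compl`), so `(τ₀, σ₀)` is a saddle point of the complemented game with the roles of the
players swapped. The sup-inf of a function is its value at a saddle point
(`iSup_iInf_eq_of_saddle`), so the two sides of the duality are `1 - Pre_{σ₀,τ₀}(v)(s)` and
`Pre_{σ₀,τ₀}(1 - v)(s)`.
-/

open scoped BigOperators
open Filter Topology

attribute [local instance] Classical.propDecidable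

noncomputable section

/-! ### Mixed moves as points of a simplex face -/

/-- Mixed moves supported in `A`: the face of the standard simplex on `M` spanned by `A`. -/
def mixedMoves {M : Type} [Fintype M] (A : Finset M) : Set (M → ℝ) :=
  stdSimplex ℝ M ∩ {p | ∀ a, a ∉ A → p a = 0}

section MixedMoves

variable {M : Type} [Fintype M]

lemma convex_mixedMoves (A : Finset M) : Convex ℝ (mixedMoves A) := by
  refine (convex_stdSimplex ℝ M).inter ?_
  intro p hp q hq x y _ _ _ a ha
  simp [hp a ha, hq a ha]

lemma isCompact_mixedMoves (A : Finset M) : IsCompact (mixedMoves A) := by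
  refine (isCompact_stdSimplex ℝ M).inter_right ?_
  simp only [Set.ofPred_forall]
  exact isClosed_iInter fun a => isClosed_iInter fun _ =>
    isClosed_eq (continuous_apply a) continuous_const

lemma nonempty_mixedMoves {A : Finset M} (hA : A.Nonempty) : (mixedMoves A).Nonempty := by
  obtain ⟨a, ha⟩ := hA
  refine ⟨Pi.single a 1, single_mem_stdSimplex ℝ a, fun b hb => ?_⟩
  exact Pi.single_eq_of_ne (fun h : b = a => hb (h ▸ ha)) _

end MixedMoves

namespace GStrategy

variable {S M : Type} [Fintype S] [Fintype M] {Γ : S → Finset M}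

lemma sum_prob (σ : GStrategy S M Γ) (s : S) : ∑ a, σ.prob s a = 1 := by
  rw [← σ.sum_one s]
  exact (Finset.sum_subset (Finset.subset_univ _) fun a _ ha => σ.supp_mem s a ha).symm

lemma prob_mem (σ : GStrategy S M Γ) (s : S) : σ.prob s ∈ mixedMoves (Γ s) :=
  ⟨⟨σ.nonneg s, σ.sum_prob s⟩, σ.supp_mem s⟩

lemma exists_prob_eq (hΓ : ∀ s, (Γ s).Nonempty) (s : S) {p : M → ℝ}
    (hp : p ∈ mixedMoves (Γ s)) : ∃ σ : GStrategy S M Γ, σ.prob s = p := by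
  choose q hq using fun t => nonempty_mixedMoves (hΓ t)
  have hr : ∀ t, Function.update q s p t ∈ mixedMoves (Γ t) := by
    intro t
    by_cases h : t = s
    · subst h; simpa using hp
    · simpa [h] using hq t
  refine ⟨⟨Function.update q s p, fun t => (hr t).1.1, fun t => ?_, fun t => (hr t).2⟩, by simp⟩
  rw [← (hr t).1.2]
  exact Finset.sum_subset (Finset.subset_univ _) fun a _ ha => (hr t).2 a ha

end GStrategy

/-! ### Saddle points of the one-shot game and duality -/

/-- Nonnegativity of `K` ensures that the inner infima are not junk values. -/
lemma iSup_iInf_eq_of_saddle {A B : Type} (K : A → B → ℝ) (hK : ∀ a b, 0 ≤ K a b)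
    (a₀ : A) (b₀ : B) (h : ∀ a b, K a b₀ ≤ K a₀ b) :
    ⨆ a, ⨅ b, K a b = K a₀ b₀ := by
  have : Nonempty A := ⟨a₀⟩
  have : Nonempty B := ⟨b₀⟩
  have hle : ∀ a, ⨅ b, K a b ≤ K a₀ b₀ := fun a =>
    (ciInf_le ⟨0, Set.forall_mem_range.2 (hK a)⟩ b₀).trans (h a b₀)
  refine le_antisymm (ciSup_le hle) ?_
  exact (le_ciInf (h a₀)).trans (le_ciSup (f := fun a => ⨅ b, K a b)
    ⟨K a₀ b₀, Set.forall_mem_range.2 hle⟩ a₀)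

namespace ConcurrentGame

variable {S M : Type} [Fintype S] [Fintype M] (G : ConcurrentGame S M)

lemma preST_nonneg (σ : G.StratR) (τ : G.StratS) {v : S → ℝ} (hv : ∀ s, 0 ≤ v s) (s : S) :
    0 ≤ G.preST σ τ v s :=
  Finset.sum_nonneg fun a _ => Finset.sum_nonneg fun b _ => Finset.sum_nonneg fun s' _ =>
    mul_nonneg (mul_nonneg (mul_nonneg (hv s') (G.δ_nonneg s a b s')) (σ.nonneg s a))
      (τ.nonneg s b)

lemma preST_compl (σ : G.StratR) (τ : G.StratS) (v : S → ℝ) (s : S) :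
    G.preST σ τ (fun t => 1 - v t) s = 1 - G.preST σ τ v s := by
  have h1 : ∑ a, ∑ b, ∑ s', G.δ s a b s' * σ.prob s a * τ.prob s b = 1 := by
    simp_rw [← Finset.sum_mul, G.δ_sum, one_mul, ← Finset.mul_sum, τ.sum_prob, mul_one]
    exact σ.sum_prob s
  conv_rhs => rw [← h1]
  simp only [preST, ← Finset.sum_sub_distrib]
  refine Finset.sum_congr rfl fun a _ => Finset.sum_congr rfl fun b _ =>
    Finset.sum_congr rfl fun s' _ => ?_
  ring

/-- Von Neumann's minimax theorem for the one-shot game at `s`, in saddle point form. -/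
lemma exists_saddle (v : S → ℝ) (s : S) : ∃ (σ₀ : G.StratR) (τ₀ : G.StratS),
    ∀ (σ : G.StratR) (τ : G.StratS), G.preST σ τ₀ v s ≤ G.preST σ₀ τ v s := by
  -- Sion's theorem minimizes over the first argument, so Safe's mixed move `y` comes first.
  let f : (M → ℝ) → (M → ℝ) → ℝ := fun y x =>
    ∑ a, ∑ b, ∑ s', v s' * G.δ s a b s' * x a * y b
  have hy : ∀ x, IsLinearMap ℝ fun y => f y x := fun x =>
    { map_add := fun y z => by simp only [f, Pi.add_apply, mul_add, Finset.sum_add_distrib]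
      map_smul := fun c y => by
        simp only [f, Pi.smul_apply, smul_eq_mul, Finset.mul_sum]
        refine Finset.sum_congr rfl fun a _ => Finset.sum_congr rfl fun b _ =>
          Finset.sum_congr rfl fun s' _ => ?_
        ring }
  have hx : ∀ y, IsLinearMap ℝ fun x => f y x := fun y =>
    { map_add := fun x z => by
        simp only [f, Pi.add_apply, mul_add, add_mul, Finset.sum_add_distrib]
      map_smul := fun c x => by
        simp only [f, Pi.smul_apply, smul_eq_mul, Finset.mul_sum]
        refine Finset.sum_congr rfl fun a _ => Finset.sum_congr rfl fun b _ =>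
          Finset.sum_congr rfl fun s' _ => ?_
        ring }
  have hyc : ∀ x, Continuous fun y => f y x := fun x => by fun_prop
  have hxc : ∀ y, Continuous fun x => f y x := fun y => by fun_prop
  have cX := convex_mixedMoves (G.ΓS s)
  have cY := convex_mixedMoves (G.ΓR s)
  obtain ⟨y₀, hy₀, x₀, hx₀, hsad⟩ := Sion.exists_isSaddlePointOn
    (f := f) (nonempty_mixedMoves (G.ΓS_ne s)) cX (isCompact_mixedMoves _)
    (fun x _ => (hyc x).lowerSemicontinuous.lowerSemicontinuousOn _)
    (fun x _ => ((hy x).mk' _ |>.convexOn cX).quasiconvexOn)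
    cY (nonempty_mixedMoves (G.ΓR_ne s)) (isCompact_mixedMoves _)
    (fun y _ => (hxc y).upperSemicontinuous.upperSemicontinuousOn _)
    (fun y _ => ((hx y).mk' _ |>.concaveOn cY).quasiconcaveOn)
  obtain ⟨σ₀, rfl⟩ := GStrategy.exists_prob_eq G.ΓR_ne s hx₀
  obtain ⟨τ₀, rfl⟩ := GStrategy.exists_prob_eq G.ΓS_ne s hy₀
  exact ⟨σ₀, τ₀, fun σ τ => hsad _ (τ.prob_mem s) _ (σ.prob_mem s)⟩

end ConcurrentGame

/-- Duality of the two Bellman operators: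
`1 - Pre_Reach(v) = Pre_Safe(1 - v)` pointwise. -/
theorem preR_preS_dual {S M : Type} [Fintype S] [Fintype M] (G : ConcurrentGame S M)
    (v : S → ℝ) (hv : ConcurrentGame.Valuation v) :
    ∀ s, 1 - G.preR v s = G.preS (fun t => 1 - v t) s := by
  intro s
  obtain ⟨σ₀, τ₀, h⟩ := G.exists_saddle v s
  have hR : G.preR v s = G.preST σ₀ τ₀ v s :=
    iSup_iInf_eq_of_saddle (fun σ τ => G.preST σ τ v s)
      (fun σ τ => G.preST_nonneg σ τ (fun t => (hv t).1) s) σ₀ τ₀ h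
  have hS : G.preS (fun t => 1 - v t) s = G.preST σ₀ τ₀ (fun t => 1 - v t) s :=
    iSup_iInf_eq_of_saddle (fun τ σ => G.preST σ τ (fun t => 1 - v t) s)
      (fun τ σ => G.preST_nonneg σ τ (fun t => sub_nonneg.2 (hv t).2) s) τ₀ σ₀ fun τ σ => by
        simp only [G.preST_compl]
        exact sub_le_sub_left (h σ τ) 1
  rw [hR, hS, G.preST_compl]
end
end
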